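/- arXiv:1104.2953 — 2 statements merged into one kernel-verified Lean document; each statement's English description precedes it below -/
import Mathlib

section
/- There exists a continuous ℂ-linear map θ from the Hilbert space ℓ²(E) = lp (fun _ : E => ℂ) 2 into the bounded operators H →L[ℂ] H such that: (i) θ (lp.single 2 i 1) = u i for every i : E; (ii) ‖a‖ ≤ ‖θ a‖ ≤ √2 · ‖a‖ for every a ∈ ℓ²(E); (iii) θ a is a compact operator for every a ∈ ℓ²(E); (iv) θ is multiplicative with respect to pointwise products: for all a, b ∈ ℓ²(E), the pointwise product function (fun i => a i * b i) is again in ℓ²(E), and θ of this product equals (θ a) ∘L (θ b). In particular, θ is injective and has closed range, so ℓ²(E) with pointwise multiplication is isomorphic as a Banach algebra to a closed subalgebra of B(H). -/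
namespace BanachEmb

variable {E : Type*}

/-- The value of the operator at a vector, as a plain function. -/
def fn (a : lp (fun _ : E => ℂ) 2) (x : lp (fun _ : Option E => ℂ) 2) : Option E → ℂ :=
  fun j => j.elim 0 (fun i => a i * (x none + x (some i)))

theorem hasSum_sq {ι : Type*} (a : lp (fun _ : ι => ℂ) 2) :
    HasSum (fun i => ‖a i‖ ^ 2) (‖a‖ ^ 2) := by
  have := lp.hasSum_norm (p := 2) (by norm_num) a
  simpa using this

theorem memlp_of_summable {ι : Type*} {f : ι → ℂ} (h : Summable (fun i => ‖f i‖ ^ 2)) :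
    Memℓp f 2 := by
  apply memℓp_gen
  simpa using h

theorem hasSum_option {f : Option E → ℝ} (h0 : f none = 0) {s : ℝ} :
    HasSum f s ↔ HasSum (fun i : E => f (some i)) s := by
  refine ((Option.some_injective E).hasSum_iff ?_).symm
  intro j hj
  cases j with
  | none => exact h0
  | some i => exact absurd ⟨i, rfl⟩ hj

theorem sq_bound (x : lp (fun _ : Option E => ℂ) 2) (i : E) :
    ‖x none + x (some i)‖ ^ 2 ≤ 2 * ‖x‖ ^ 2 := by
  classical
  have h1 := sum_le_hasSum ({none, some i} : Finset (Option E)) (fun _ _ => by positivity)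
    (hasSum_sq x)
  rw [Finset.sum_pair (by simp)] at h1
  have h2 := norm_add_le (x none) (x (some i))
  have h3 := norm_nonneg (x none + x (some i))
  nlinarith [sq_nonneg (‖x none‖ - ‖x (some i)‖)]

theorem term_bound (a : lp (fun _ : E => ℂ) 2) (x : lp (fun _ : Option E => ℂ) 2) (i : E) :
    ‖fn a x (some i)‖ ^ 2 ≤ ‖a i‖ ^ 2 * (2 * ‖x‖ ^ 2) := by
  simp only [fn, Option.elim, norm_mul, mul_pow]
  exact mul_le_mul_of_nonneg_left (sq_bound x i) (by positivity)

theorem summable_fn (a : lp (fun _ : E => ℂ) 2) (x : lp (fun _ : Option E => ℂ) 2) :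
    Summable (fun j => ‖fn a x j‖ ^ 2) := by
  have : Summable (fun i : E => ‖fn a x (some i)‖ ^ 2) :=
    Summable.of_nonneg_of_le (fun _ => by positivity) (term_bound a x)
      ((hasSum_sq a).summable.mul_right _)
  exact ((hasSum_option (by simp [fn])).2 this.hasSum).summable

/-- The value of the operator at a vector. -/
def vec (a : lp (fun _ : E => ℂ) 2) (x : lp (fun _ : Option E => ℂ) 2) :
    lp (fun _ : Option E => ℂ) 2 := ⟨fn a x, memlp_of_summable (summable_fn a x)⟩

@[simp] theorem vec_none (a : lp (fun _ : E => ℂ) 2) (x : lp (fun _ : Option E => ℂ) 2) :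
    vec a x none = 0 := rfl

@[simp] theorem vec_some (a : lp (fun _ : E => ℂ) 2) (x : lp (fun _ : Option E => ℂ) 2) (i : E) :
    vec a x (some i) = a i * (x none + x (some i)) := rfl

theorem norm_vec_le (a : lp (fun _ : E => ℂ) 2) (x : lp (fun _ : Option E => ℂ) 2) :
    ‖vec a x‖ ≤ Real.sqrt 2 * ‖a‖ * ‖x‖ := by
  have h1 := (hasSum_option (by simp)).1 (hasSum_sq (vec a x))
  have h2 := hasSum_le (term_bound a x) h1 ((hasSum_sq a).mul_right _)
  refine le_of_sq_le_sq ?_ (by positivity)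
  rw [mul_pow, mul_pow, Real.sq_sqrt (by norm_num)]
  linarith

theorem ext_opt {v w : lp (fun _ : Option E => ℂ) 2} (h0 : v none = w none)
    (h1 : ∀ i, v (some i) = w (some i)) : v = w := by
  apply lp.ext
  funext j
  cases j with
  | none => exact h0
  | some i => exact h1 i

/-- The embedding. -/
noncomputable def theta : lp (fun _ : E => ℂ) 2 →L[ℂ]
    (lp (fun _ : Option E => ℂ) 2 →L[ℂ] lp (fun _ : Option E => ℂ) 2) :=
  LinearMap.mkContinuous₂
    (LinearMap.mk₂ ℂ vec
      (fun a b x => ext_opt (by simp) (fun i => by simp; ring))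
      (fun c a x => ext_opt (by simp) (fun i => by simp; ring))
      (fun a x y => ext_opt (by simp) (fun i => by simp; ring))
      (fun c a x => ext_opt (by simp) (fun i => by simp; ring)))
    (Real.sqrt 2) norm_vec_le

@[simp] theorem theta_apply (a : lp (fun _ : E => ℂ) 2) (x : lp (fun _ : Option E => ℂ) 2) :
    theta a x = vec a x := rfl

theorem norm_le_theta (a : lp (fun _ : E => ℂ) 2) : ‖a‖ ≤ ‖theta a‖ := by
  classical
  set d : lp (fun _ : Option E => ℂ) 2 := lp.single 2 none (1 : ℂ) with hd
  have hdn : ‖d‖ = 1 := by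
    rw [hd, lp.norm_single (by norm_num)]; simp
  have h1 := (hasSum_option (by simp)).1 (hasSum_sq (vec a d))
  have h2 : (fun i : E => ‖vec a d (some i)‖ ^ 2) = fun i => ‖a i‖ ^ 2 := by
    funext i
    simp [hd]
  rw [h2] at h1
  have h3 := h1.unique (hasSum_sq a)
  have h4 := (theta a).le_opNorm d
  rw [hdn, mul_one, theta_apply] at h4
  have h5 : ‖vec a d‖ = ‖a‖ := by
    exact (sq_eq_sq₀ (norm_nonneg _) (norm_nonneg _)).1 h3
  rwa [h5] at h4

theorem theta_single [DecidableEq E] (i : E) (c : ℂ) (x : lp (fun _ : Option E => ℂ) 2) :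
    theta (lp.single 2 i c) x
      = (x none + x (some i)) • lp.single 2 (some i) c := by
  refine ext_opt (by simp) (fun j => ?_)
  by_cases h : j = i
  · subst h; simp [mul_comm]
  · simp [h]

theorem compact_single [DecidableEq E] (i : E) (c : ℂ) :
    IsCompactOperator ⇑(theta (lp.single 2 i c : lp (fun _ : E => ℂ) 2)) := by
  let v : lp (fun _ : Option E => ℂ) 2 := lp.single 2 (some i) (1 : ℂ)
  -- The functional x ↦ c * (x none + x (some i)) is recovered as an inner product with the range.
  let T := theta (lp.single 2 i c : lp (fun _ : E => ℂ) 2)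
  let g : lp (fun _ : Option E => ℂ) 2 →L[ℂ] ℂ := (innerSL ℂ v).comp T
  have hT : ⇑T = ⇑((ContinuousLinearMap.toSpanSingleton ℂ v).comp g) := by
    funext x
    refine ext_opt ?_ (fun j => ?_)
    · simp [T, g, v, lp.inner_single_left]
    · by_cases h : j = i
      · subst h; simp [T, g, v, lp.inner_single_left]
      · simp [T, g, v, lp.inner_single_left, h]
  change IsCompactOperator ⇑T
  rw [hT]
  have hg : IsCompactOperator ⇑(ContinuousLinearMap.toSpanSingleton ℂ v) := by
    refine ⟨Set.image (ContinuousLinearMap.toSpanSingleton ℂ v) (Metric.closedBall 0 1), ?_, ?_⟩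
    · exact (isCompact_closedBall _ _).image (ContinuousLinearMap.continuous _)
    · exact Filter.mem_of_superset (Metric.closedBall_mem_nhds _ one_pos)
        (Set.subset_preimage_image _ _)
  exact hg.comp_clm g

theorem compact_theta (a : lp (fun _ : E => ℂ) 2) : IsCompactOperator ⇑(theta a) := by
  classical
  have h1 := lp.hasSum_single (p := 2) (by norm_num) a
  have h2 := theta.hasSum h1
  refine isClosed_setOfPred_isCompactOperator.mem_of_tendsto h2
    (Filter.Eventually.of_forall fun s => ?_)
  exact sum_mem (S := compactOperator (RingHom.id ℂ)
    (lp (fun _ : Option E => ℂ) 2) (lp (fun _ : Option E => ℂ) 2)) fun i _ => compact_single i _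

theorem theta_mul (a b ab : lp (fun _ : E => ℂ) 2) (h : ∀ i, ab i = a i * b i) :
    theta ab = (theta a).comp (theta b) := by
  ext1 x
  refine ext_opt (by simp) (fun i => ?_)
  simp [h, mul_assoc]

theorem memlp_mul (a b : lp (fun _ : E => ℂ) 2) : Memℓp (fun i => a i * b i) 2 := by
  apply memlp_of_summable
  refine Summable.of_nonneg_of_le (fun _ => by positivity) (fun i => ?_)
    ((hasSum_sq a).summable.mul_right (‖b‖ ^ 2))
  rw [norm_mul, mul_pow]
  gcongr
  exact lp.norm_apply_le_norm (by norm_num) b i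

end BanachEmb

/-- There is a continuous linear map `θ : ℓ²(E) → B(H)`, `H = ℓ²(Option E)`, sending the
standard basis vector at `i` to `u i`, satisfying `‖a‖ ≤ ‖θ a‖ ≤ √2 ‖a‖`, taking values in the
compact operators, and multiplicative for pointwise products.  In particular `θ` is an
isomorphism of Banach algebras from `ℓ²(E)` (with pointwise product) onto a closed subalgebra
of `B(H)`. -/
theorem exists_banach_algebra_embedding {E : Type*} [DecidableEq E]
    (u : E → (lp (fun _ : Option E => ℂ) 2 →L[ℂ] lp (fun _ : Option E => ℂ) 2))
    (hu : ∀ (i : E) (x : lp (fun _ : Option E => ℂ) 2),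
      u i x = (x none + x (some i)) • lp.single 2 (some i) (1 : ℂ)) :
    ∃ θ : lp (fun _ : E => ℂ) 2 →L[ℂ]
        (lp (fun _ : Option E => ℂ) 2 →L[ℂ] lp (fun _ : Option E => ℂ) 2),
      (∀ i : E, θ (lp.single 2 i (1 : ℂ)) = u i) ∧
      (∀ a : lp (fun _ : E => ℂ) 2, ‖a‖ ≤ ‖θ a‖ ∧ ‖θ a‖ ≤ Real.sqrt 2 * ‖a‖) ∧
      (∀ a : lp (fun _ : E => ℂ) 2, IsCompactOperator ⇑(θ a)) ∧
      (∀ a b : lp (fun _ : E => ℂ) 2, Memℓp (fun i => a i * b i) 2) ∧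
      (∀ a b ab : lp (fun _ : E => ℂ) 2,
        (∀ i, ab i = a i * b i) → θ ab = (θ a).comp (θ b)) := by
  refine ⟨BanachEmb.theta, fun i => ?_, fun a => ⟨BanachEmb.norm_le_theta a, ?_⟩,
    BanachEmb.compact_theta, BanachEmb.memlp_mul, BanachEmb.theta_mul⟩
  · ext1 x
    rw [hu, BanachEmb.theta_single]
  · exact ContinuousLinearMap.opNorm_le_bound _ (by positivity) (BanachEmb.norm_vec_le a)
end

section
/- Let H be a complex Hilbert space and let p : H →L[ℂ] H be an idempotent operator (p.comp p = p) with ‖p‖ ≤ 1. Then p is self-adjoint; that is, every contractive idempotent on a Hilbert space is an orthogonal projection. -/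
/-- Every contractive idempotent on a complex Hilbert space is self-adjoint,
i.e. an orthogonal projection. -/
theorem contractive_idempotent_isSelfAdjoint {H : Type*} [NormedAddCommGroup H]
    [InnerProductSpace ℂ H] [CompleteSpace H]
    (p : H →L[ℂ] H) (hidem : p.comp p = p) (hnorm : ‖p‖ ≤ 1) :
    IsSelfAdjoint p := by
  have key : star p * p = p := by
    ext x
    have hpp : p (p x) = p x := congrArg (fun q : H →L[ℂ] H => q x) hidem
    change (star p) (p x) = p x
    have h1 : ‖(star p) (p x)‖ ≤ ‖p x‖ := by
      have h := (star p).le_of_opNorm_le (c := 1) (by rw [norm_star]; exact hnorm) (p x)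
      simpa using h
    have h2 : inner ℂ ((star p) (p x)) (p x) = inner ℂ (p x) (p x) := by
      rw [ContinuousLinearMap.star_eq_adjoint, ContinuousLinearMap.adjoint_inner_left, hpp]
    have h3 := norm_sub_sq (𝕜 := ℂ) ((star p) (p x)) (p x)
    rw [h2, inner_self_eq_norm_sq] at h3
    have h4 : ‖(star p) (p x) - p x‖ ^ 2 ≤ 0 := by
      nlinarith [norm_nonneg ((star p) (p x)), norm_nonneg (p x)]
    have h5 : ‖(star p) (p x) - p x‖ = 0 := by
      nlinarith [sq_nonneg ‖(star p) (p x) - p x‖]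
    exact sub_eq_zero.mp (norm_eq_zero.mp h5)
  rw [← key]
  exact IsSelfAdjoint.star_mul_self p
end
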